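/- (Induction step of the RPE recursion.) Let 0 < ξ ≤ 1, let j ≥ 1 be an integer, and let λ, a, θ' ∈ ℝ. Suppose ‖λ − θ'‖₀ < πξ/(3·2^{j−1}) and ‖2^j·λ − a‖₀ < πξ/3. Let S = {(2kπ + a)/2^j : k = 0, 1, …, 2^j − 1} and let θ ∈ S be any element satisfying ‖θ − θ'‖₀ ≤ ‖s − θ'‖₀ for all s ∈ S. Then ‖λ − θ‖₀ < πξ/(3·2^j). -/

import Mathlib

/-- The circular norm of `θ : ℝ`: the distance from `θ` to the nearest
integer multiple of `2π` (the norm of the image of `θ` in `ℝ/2πℤ`). -/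
noncomputable def circNorm (θ : ℝ) : ℝ := ‖(θ : Real.Angle)‖

/-!
On the circle, dividing `n • x - b` by `n` yields a solution `z` of `n • z = b` within
`‖n • x - b‖ / n` of `x`. Distinct solutions are at least one `n`-th of the period apart, so when
`x'` approximates `x` well enough, the solution closest to `x'` can only be `z`.
-/

section Circle

variable {p : ℝ} {n : ℕ}

theorem exists_coe_eq_and_abs_eq_norm (x : AddCircle p) :
    ∃ t : ℝ, (t : AddCircle p) = x ∧ |t| = ‖x‖ := by
  induction x using QuotientAddGroup.induction_on with
  | H t =>
    refine ⟨t - round (p⁻¹ * t) * p, ?_, (AddCircle.norm_eq p).symm⟩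
    rw [← zsmul_eq_mul, AddCircle.coe_sub, AddCircle.coe_zsmul, AddCircle.coe_period, smul_zero,
      sub_zero]

theorem exists_nsmul_eq_and_mul_norm_sub_le (hn : n ≠ 0) (x b : AddCircle p) :
    ∃ z : AddCircle p, n • z = b ∧ n * ‖x - z‖ ≤ ‖n • x - b‖ := by
  obtain ⟨t, ht, ht_norm⟩ := exists_coe_eq_and_abs_eq_norm (n • x - b)
  have hn' : (n : ℝ) ≠ 0 := Nat.cast_ne_zero.mpr hn
  refine ⟨x - (t / n : ℝ), ?_, ?_⟩
  · rw [nsmul_sub, ← AddCircle.coe_nsmul, nsmul_eq_mul, mul_div_cancel₀ t hn', ht, sub_sub_cancel]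
  · calc n * ‖x - (x - ((t / n : ℝ) : AddCircle p))‖
        = n * ‖((t / n : ℝ) : AddCircle p)‖ := by rw [sub_sub_cancel]
      _ ≤ n * |t / n| := by gcongr; exact QuotientAddGroup.norm_mk_le_norm
      _ = ‖n • x - b‖ := by rw [abs_div, Nat.abs_cast, mul_div_cancel₀ _ hn', ht_norm]

theorem eq_of_nsmul_eq_of_mul_norm_sub_lt {y z : AddCircle p} (hn : n ≠ 0)
    (hyz : n • y = n • z) (hlt : n * ‖y - z‖ < p) : y = z := by
  have : Fact (0 < p) := ⟨lt_of_le_of_lt (by positivity) hlt⟩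
  by_contra hne
  have htors : n • (y - z) = 0 := by rw [nsmul_sub, hyz, sub_self]
  have hfin : IsOfFinAddOrder (y - z) := isOfFinAddOrder_iff_nsmul_eq_zero.mpr
    ⟨n, Nat.pos_of_ne_zero hn, htors⟩
  refine hlt.not_ge ?_
  calc p ≤ addOrderOf (y - z) • ‖y - z‖ :=
        AddCircle.le_add_order_smul_norm_of_isOfFinAddOrder hfin (sub_ne_zero.mpr hne)
    _ = addOrderOf (y - z) * ‖y - z‖ := nsmul_eq_mul _ _
    _ ≤ n * ‖y - z‖ := by gcongr; exact addOrderOf_le_of_nsmul_eq_zero hn.bot_lt htors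

theorem mul_norm_sub_le_of_isClosest_nsmul_eq {x x' y b : AddCircle p} (hn : n ≠ 0)
    (hx : 2 * (n * ‖x - x'‖ + ‖n • x - b‖) < p) (hy : n • y = b)
    (hmin : ∀ z, n • z = b → ‖y - x'‖ ≤ ‖z - x'‖) :
    n * ‖x - y‖ ≤ ‖n • x - b‖ := by
  obtain ⟨z, hz, hxz⟩ := exists_nsmul_eq_and_mul_norm_sub_le hn x b
  suffices hyz : y = z by rwa [hyz]
  refine eq_of_nsmul_eq_of_mul_norm_sub_lt hn (hy.trans hz.symm) (lt_of_le_of_lt ?_ hx)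
  have hz_x' : ‖z - x'‖ ≤ ‖x - z‖ + ‖x - x'‖ := by
    simpa only [norm_sub_rev z x] using norm_sub_le_norm_sub_add_norm_sub z x x'
  calc n * ‖y - z‖
      ≤ n * (‖y - x'‖ + ‖z - x'‖) := by
        gcongr
        simpa only [norm_sub_rev x' z] using norm_sub_le_norm_sub_add_norm_sub y x' z
    _ ≤ n * (2 * (‖x - z‖ + ‖x - x'‖)) := by gcongr; linarith [hmin z hz]
    _ = 2 * (n * ‖x - x'‖ + n * ‖x - z‖) := by ring
    _ ≤ 2 * (n * ‖x - x'‖ + ‖n • x - b‖) := by gcongr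

end Circle

/-- Real representatives of the `n` angles `y` with `n • y = a`; the theorem's candidate set is
`angleDivisions (2 ^ j) a`. -/
def angleDivisions (n : ℕ) (a : ℝ) : Set ℝ :=
  {x | ∃ k : ℕ, k < n ∧ x = (2 * k * Real.pi + a) / n}

theorem image_coe_angleDivisions {n : ℕ} (hn : n ≠ 0) (a : ℝ) :
    (fun x : ℝ => (x : Real.Angle)) '' angleDivisions n a = {y | n • y = (a : Real.Angle)} := by
  have hn' : (n : ℝ) ≠ 0 := Nat.cast_ne_zero.mpr hn
  have hroot : n • ((a / n : ℝ) : Real.Angle) = a := by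
    rw [← Real.Angle.natCast_mul_eq_nsmul, mul_div_cancel₀ a hn']
  have hcoe (k : ℕ) : (((2 * k * Real.pi + a) / n : ℝ) : Real.Angle)
      = (a / n : ℝ) + k • ((2 * Real.pi / n : ℝ) : Real.Angle) := by
    rw [← Real.Angle.natCast_mul_eq_nsmul, ← Real.Angle.coe_add]
    congr 1
    ring
  ext y
  rw [Set.mem_ofPred_eq, ← hroot, Real.Angle.nsmul_eq_iff hn]
  constructor
  · rintro ⟨_, ⟨k, hk, rfl⟩, rfl⟩
    exact ⟨⟨k, hk⟩, hcoe k⟩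
  · rintro ⟨k, rfl⟩
    exact ⟨_, ⟨k, k.isLt, rfl⟩, hcoe k⟩

theorem induction_step_general {n : ℕ} {δ η lam a θ θ' : ℝ}
    (hlam : circNorm (lam - θ') < δ) (hmul : circNorm (n * lam - a) < η)
    (hbudget : n * δ + η ≤ Real.pi) (hθ : θ ∈ angleDivisions n a)
    (hmin : ∀ s ∈ angleDivisions n a, circNorm (θ - θ') ≤ circNorm (s - θ')) :
    circNorm (lam - θ) < η / n := by
  have hn : n ≠ 0 := by
    obtain ⟨k, hk, -⟩ := hθ
    exact Nat.ne_zero_of_lt hk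
  have hn_pos : (0 : ℝ) < n := Nat.cast_pos.mpr hn.bot_lt
  have hcoe : ((n * lam - a : ℝ) : Real.Angle) = n • (lam : Real.Angle) - a := by
    rw [Real.Angle.coe_sub, Real.Angle.natCast_mul_eq_nsmul]
  simp only [circNorm, hcoe, Real.Angle.coe_sub] at hlam hmul hmin ⊢
  have hroots := image_coe_angleDivisions hn a
  have hθ_root : n • (θ : Real.Angle) = a := hroots.subset ⟨θ, hθ, rfl⟩
  have hclosest (z : Real.Angle) (hz : n • z = a) : ‖(θ : Real.Angle) - θ'‖ ≤ ‖z - θ'‖ := by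
    obtain ⟨s, hs, rfl⟩ := hroots.superset hz
    exact hmin s hs
  have hgap : 2 * (n * ‖(lam : Real.Angle) - θ'‖ + ‖n • (lam : Real.Angle) - a‖)
      < 2 * Real.pi := by
    linarith [mul_lt_mul_of_pos_left hlam hn_pos]
  rw [lt_div_iff₀' hn_pos]
  exact (mul_norm_sub_le_of_isClosest_nsmul_eq (p := 2 * Real.pi) hn hgap hθ_root
    hclosest).trans_lt hmul

/-- Induction step of the RPE recursion: if `‖λ − θ'‖₀ < πξ/(3·2^{j−1})` and
`‖2^j λ − a‖₀ < πξ/3`, then any element `θ` of the candidate set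
`S = {(2kπ + a)/2^j : k = 0, …, 2^j − 1}` minimizing the circular distance to `θ'`
satisfies `‖λ − θ‖₀ < πξ/(3·2^j)`. -/
theorem induction_step (ξ : ℝ) (hξ0 : 0 < ξ) (hξ1 : ξ ≤ 1) (j : ℕ) (hj : 1 ≤ j)
    (lam a θ' : ℝ)
    (h1 : circNorm (lam - θ') < Real.pi * ξ / (3 * 2 ^ (j - 1)))
    (h2 : circNorm (2 ^ j * lam - a) < Real.pi * ξ / 3)
    (S : Set ℝ)
    (hS : S = {x : ℝ | ∃ k : ℕ, k < 2 ^ j ∧ x = (2 * k * Real.pi + a) / 2 ^ j})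
    (θ : ℝ) (hθS : θ ∈ S)
    (hmin : ∀ s ∈ S, circNorm (θ - θ') ≤ circNorm (s - θ')) :
    circNorm (lam - θ) < Real.pi * ξ / (3 * 2 ^ j) := by
  have hcast : ((2 ^ j : ℕ) : ℝ) = 2 ^ j := by norm_num
  obtain rfl : S = angleDivisions (2 ^ j) a := by rw [hS, angleDivisions, hcast]
  have hbudget : 2 ^ j * (Real.pi * ξ / (3 * 2 ^ (j - 1))) + Real.pi * ξ / 3 ≤ Real.pi :=
    calc 2 ^ j * (Real.pi * ξ / (3 * 2 ^ (j - 1))) + Real.pi * ξ / 3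
        = Real.pi * ξ := by rw [← mul_pow_sub_one (Nat.ne_zero_of_lt hj)]; field_simp; norm_num
      _ ≤ Real.pi := mul_le_of_le_one_right Real.pi_pos.le hξ1
  rw [← div_div, ← hcast]
  rw [← hcast] at h2 hbudget
  exact induction_step_general h1 h2 hbudget hθS hmin
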